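/- Suppose Γ is a configuration satisfying the Working Conditions with at least one bad vertex, let φ be an embedding of Γ into ℤ^N, let x be a bad vertex, and suppose the restriction of φ to the vertices of the extended bad part is semi-standard at x. If v is a vertex with v ≠ x and supp(φ(v)) ∩ supp(φ(x)) ≠ ∅, then v is adjacent to x. -/

import Mathlib

namespace LensPaper

/-- A finite weighted simple graph: the combinatorial data underlying a configuration
(a disjoint union of weighted linear graphs).  The fact that every connected component
is a path is recorded separately by `Config.IsLinear`. -/
structure Config where
  V : Type
  fin : Fintype V
  deq : DecidableEq V
  graph : SimpleGraph V
  adjDec : DecidableRel graph.Adj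
  w : V → ℤ

attribute [instance] Config.fin Config.deq Config.adjDec

namespace Config

/-- The degree of a vertex. -/
noncomputable def deg (C : Config) (v : C.V) : ℕ := (C.graph.neighborSet v).ncard

/-- A configuration: every component is a path, i.e. all degrees are at most `2` and the
graph is acyclic. -/
def IsLinear (C : Config) : Prop :=
  (∀ v : C.V, C.deg v ≤ 2) ∧ C.graph.IsAcyclic

/-- The adjusted weight `w'(v) = w(v) - deg(v)`. -/
noncomputable def adjw (C : Config) (v : C.V) : ℤ := C.w v - C.deg v

/-- A vertex is bad if it is adjacent to two distinct vertices of positive adjusted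
weight. -/
def IsBad (C : Config) (x : C.V) : Prop :=
  ∃ u v : C.V, u ≠ v ∧ C.graph.Adj x u ∧ C.graph.Adj x v ∧ 0 < C.adjw u ∧ 0 < C.adjw v

/-- A leaf: a vertex of degree at most one. -/
def IsLeaf (C : Config) (v : C.V) : Prop := C.deg v ≤ 1

/-- `v 0, v 1, …, v m` is a chain of consecutive (distinct) vertices. -/
def IsChain (C : Config) (m : ℕ) (v : ℕ → C.V) : Prop :=
  (∀ i ≤ m, ∀ j ≤ m, v i = v j → i = j) ∧ ∀ i < m, C.graph.Adj (v i) (v (i + 1))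

/-- The chain `v 0, …, v m` has the list `p` as its sequence of adjusted weights. -/
def ChainPattern (C : Config) (m : ℕ) (v : ℕ → C.V) (p : List ℤ) : Prop :=
  C.IsChain m v ∧ m + 1 = p.length ∧ ∀ i : Fin p.length, C.adjw (v i) = p.get i

/-- `Γ` contains a chain of consecutive vertices whose adjusted weights, read in order,
form the list `p`. -/
def HasPattern (C : Config) (p : List ℤ) : Prop := ∃ m v, C.ChainPattern m v p

/-- A chain realizing a bad-part pattern `p` (each entry of `p` is an adjusted weight
together with a flag marking the bad positions): the chain has the prescribed adjusted
weights, and the bad vertices of the configuration are exactly the vertices of the chain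
in the flagged positions. -/
def IsBadPartChain (C : Config) (p : List (ℤ × Bool)) (m : ℕ) (v : ℕ → C.V) : Prop :=
  C.IsChain m v ∧ m + 1 = p.length ∧
  (∀ i : Fin p.length, C.adjw (v i) = (p.get i).1) ∧
  (∀ x : C.V, C.IsBad x ↔ ∃ i : Fin p.length, (p.get i).2 = true ∧ v i = x)

end Config

/-- The chains of adjusted weights forbidden by Working Condition VI. -/
def forbiddenPatterns : List (List ℤ) :=
  [[1, 0, 0, 2], [1, 0, 0, 3], [1, 0, 0, 0, 3], [1, 1, 0, 0, 1, 2], [3, 1, 0, 0, 1],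
   [1, 0, 1, 2], [1, 0, 1, 3], [1, 1, 0, 2], [1, 1, 0, 1, 1, 2]]

/-- The bad-part patterns of Working Condition VII; `true` marks the bad positions. -/
def badPatterns : List (List (ℤ × Bool)) :=
  [[(1, false), (0, true), (1, false)],
   [(1, false), (0, true), (2, false)],
   [(1, false), (0, true), (3, false)],
   [(1, false), (1, true), (1, false)],
   [(1, false), (1, true), (2, false)],
   [(1, false), (2, true), (1, false)],
   [(1, false), (0, true), (1, false), (0, true), (1, false)],
   [(1, false), (0, true), (1, false), (0, true), (2, false)],
   [(1, false), (0, true), (1, false), (1, true), (1, false)],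
   [(1, false), (0, true), (1, false), (1, true), (2, false)],
   [(1, false), (1, true), (1, true), (1, false)],
   [(1, false), (1, true), (1, true), (1, true), (1, false)],
   [(1, false), (1, true), (2, true), (1, false)]]

namespace Config

/-- The Working Conditions (I)–(VII). -/
def WorkingConditions (C : Config) : Prop :=
  (∀ v : C.V, 2 ≤ C.w v) ∧
  (∀ v : C.V, C.adjw v ≤ 3) ∧
  (∀ u v : C.V, 1 < C.adjw u → 1 < C.adjw v → u = v) ∧
  (∀ v x : C.V, 1 < C.adjw v → C.IsBad x → C.adjw x = 1 → C.graph.Adj x v) ∧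
  ((∃ v : C.V, C.adjw v = 3) →
     ∀ u u' : C.V, C.graph.Adj u u' → C.adjw u = 1 → C.adjw u' = 1 → False) ∧
  (∀ u v x : C.V, C.graph.Adj u v → C.adjw u = 1 → C.adjw v = 1 →
     C.IsBad x → C.adjw x = 2 → C.graph.Adj x u ∨ C.graph.Adj x v) ∧
  (∀ p ∈ forbiddenPatterns, ¬ C.HasPattern p) ∧
  ((∃ x : C.V, C.IsBad x) → ∃ p ∈ badPatterns, ∃ m v, C.IsBadPartChain p m v)

end Config

/-- The standard inner product on `ℤ^N`. -/
def dot {N : ℕ} (x y : Fin N → ℤ) : ℤ := ∑ i, x i * y i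

/-- The support of a vector of `ℤ^N` with respect to the standard orthonormal basis. -/
def supp {N : ℕ} (x : Fin N → ℤ) : Finset (Fin N) :=
  Finset.univ.filter fun i => x i ≠ 0

namespace Config

/-- An embedding of a configuration into `ℤ^N`. -/
def IsEmbedding (C : Config) (N : ℕ) (φ : C.V → Fin N → ℤ) : Prop :=
  ∀ u v : C.V, dot (φ u) (φ v) =
    if u = v then C.w u else if C.graph.Adj u v then -1 else 0

/-- The restriction of `φ` to `S` is standard. -/
def IsStandardOn (C : Config) (N : ℕ) (φ : C.V → Fin N → ℤ) (S : Set C.V) : Prop :=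
  ∀ u ∈ S, ∀ v ∈ S,
    ((supp (φ u) ∩ supp (φ v)).card : ℤ) =
      if u = v then C.w v else if C.graph.Adj u v then 1 else 0

/-- A standard embedding. -/
def IsStandard (C : Config) (N : ℕ) (φ : C.V → Fin N → ℤ) : Prop :=
  C.IsStandardOn N φ Set.univ

/-- The restriction of `φ` to `S` is semi-standard at `x`. -/
def IsSemiStandardAtOn (C : Config) (N : ℕ) (φ : C.V → Fin N → ℤ) (x : C.V)
    (S : Set C.V) : Prop :=
  (∀ u ∈ S, ∀ v ∈ S,
    ((supp (φ u) ∩ supp (φ v)).card : ℤ) =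
      if u = v then C.w v
      else if C.graph.Adj u v then 1
      else if C.graph.Adj x u ∧ C.graph.Adj x v then 2
      else 0) ∧
  (∀ u ∈ S, ∀ v ∈ S, u ≠ v → C.graph.Adj x u → C.graph.Adj x v →
    (supp (φ u) ∩ supp (φ x) ∩ supp (φ v)).card = 1)

/-- A semi-standard embedding: semi-standard at some bad vertex. -/
def IsSemiStandard (C : Config) (N : ℕ) (φ : C.V → Fin N → ℤ) : Prop :=
  ∃ x : C.V, C.IsBad x ∧ C.IsSemiStandardAtOn N φ x Set.univ

/-- A candidate for the extended bad part: a chain containing the bad part whose two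
ends are either leaves or preceded by two consecutive vertices of vanishing adjusted
weight. -/
def IsEBPCand (C : Config) (m : ℕ) (v : ℕ → C.V) : Prop :=
  C.IsChain m v ∧
  (∀ p ∈ badPatterns, ∀ mb vb, C.IsBadPartChain p mb vb →
     ∀ i ≤ mb, ∃ j ≤ m, v j = vb i) ∧
  (C.IsLeaf (v 0) ∨ (2 ≤ m ∧ C.adjw (v 1) = 0 ∧ C.adjw (v 2) = 0)) ∧
  (C.IsLeaf (v m) ∨ (2 ≤ m ∧ C.adjw (v (m - 1)) = 0 ∧ C.adjw (v (m - 2)) = 0))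

/-- The extended bad part: a candidate with the fewest vertices. -/
def IsExtBadPart (C : Config) (m : ℕ) (v : ℕ → C.V) : Prop :=
  C.IsEBPCand m v ∧ ∀ m' v', C.IsEBPCand m' v' → m ≤ m'

/-- The set of vertices of the chain `v 0, …, v m`. -/
def ebpSet (C : Config) (m : ℕ) (v : ℕ → C.V) : Set C.V := {y | ∃ i ≤ m, v i = y}

/-- The outside part of `Γ` relative to the extended bad part `v 0, …, v m`. -/
def OutsidePart (C : Config) (m : ℕ) (v : ℕ → C.V) : Set C.V :=
  {x | ∀ i ≤ m, v i ≠ x}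
  ∪ {x | ¬ C.IsLeaf (v 0) ∧ (x = v 0 ∨ x = v 1 ∨ x = v 2)}
  ∪ {x | ¬ C.IsLeaf (v m) ∧ (x = v m ∨ x = v (m - 1) ∨ x = v (m - 2))}

/-- A screw at the front end of the extended bad part. -/
def IsFrontScrew (C : Config) (N : ℕ) (φ : C.V → Fin N → ℤ) (m : ℕ) (v : ℕ → C.V)
    (e : Fin N) : Prop :=
  ¬ C.IsLeaf (v 0) ∧ 3 ≤ m ∧ φ (v 2) e ≠ 0 ∧ φ (v 3) e ≠ 0

/-- A screw at the back end of the extended bad part. -/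
def IsBackScrew (C : Config) (N : ℕ) (φ : C.V → Fin N → ℤ) (m : ℕ) (v : ℕ → C.V)
    (e : Fin N) : Prop :=
  ¬ C.IsLeaf (v m) ∧ 3 ≤ m ∧ φ (v (m - 2)) e ≠ 0 ∧ φ (v (m - 3)) e ≠ 0

/-- All screws of `Γ` (with respect to `φ`) are clean. -/
def AllScrewsClean (C : Config) (N : ℕ) (φ : C.V → Fin N → ℤ) (m : ℕ)
    (v : ℕ → C.V) : Prop :=
  (∀ e : Fin N, C.IsFrontScrew N φ m v e →
    ∀ u : C.V, u ≠ v 2 → u ≠ v 3 → φ u e = 0) ∧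
  (∀ e : Fin N, C.IsBackScrew N φ m v e →
    ∀ u : C.V, u ≠ v (m - 2) → u ≠ v (m - 3) → φ u e = 0)

end Config

section Helpers

theorem dot_comm' {N : ℕ} (a b : Fin N → ℤ) : dot a b = dot b a := by
  unfold dot; exact Finset.sum_congr rfl fun i _ => mul_comm _ _

theorem dot_add_left {N : ℕ} (a b c : Fin N → ℤ) : dot (a + b) c = dot a c + dot b c := by
  simp [dot, add_mul, Finset.sum_add_distrib]

theorem dot_sub_left {N : ℕ} (a b c : Fin N → ℤ) : dot (a - b) c = dot a c - dot b c := by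
  simp [dot, sub_mul, Finset.sum_sub_distrib]

theorem dot_single {N : ℕ} (i : Fin N) (a : ℤ) (c : Fin N → ℤ) :
    dot (Pi.single i a) c = a * c i := by
  simp [dot, Pi.single_apply]

theorem dot_smul_left {N : ℕ} (n : ℤ) (a c : Fin N → ℤ) : dot (n • a) c = n * dot a c := by
  simp [dot, Finset.mul_sum, mul_assoc]

theorem dot_zero_left {N : ℕ} (c : Fin N → ℤ) : dot 0 c = 0 := by simp [dot]

theorem mem_supp {N : ℕ} (z : Fin N → ℤ) (k : Fin N) : k ∈ supp z ↔ z k ≠ 0 := by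
  simp [supp]

theorem sq_le_dot {N : ℕ} (z : Fin N → ℤ) (k : Fin N) : z k * z k ≤ dot z z :=
  Finset.single_le_sum (f := fun i => z i * z i) (fun _ _ => mul_self_nonneg _)
    (Finset.mem_univ k)

theorem dot_self_nonneg {N : ℕ} (z : Fin N → ℤ) : 0 ≤ dot z z :=
  Finset.sum_nonneg fun _ _ => mul_self_nonneg _

theorem peel {N : ℕ} (z : Fin N → ℤ) (t : Fin N) :
    dot (z - Pi.single t (z t)) (z - Pi.single t (z t)) = dot z z - z t * z t := by
  rw [dot_sub_left, dot_comm' z, dot_sub_left, dot_single, dot_single]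
  simp

theorem small0 {N : ℕ} (z : Fin N → ℤ) (h : dot z z ≤ 0) : z = 0 := by
  funext k
  have := sq_le_dot z k
  simp; nlinarith

theorem small1 {N : ℕ} (z : Fin N → ℤ) (h : dot z z ≤ 1) (hz : z ≠ 0) :
    ∃ t τ, z = Pi.single t τ ∧ τ * τ = 1 := by
  obtain ⟨t, ht⟩ := Function.ne_iff.mp hz
  have ht : z t ≠ 0 := ht
  have h1 := peel z t
  have h2 : 0 < z t * z t := mul_self_pos.2 ht
  refine ⟨t, z t, ?_, ?_⟩
  · have := small0 (z - Pi.single t (z t)) (by omega)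
    exact sub_eq_zero.mp this
  · have := sq_le_dot z t
    omega

/-- A vector of norm two with a nonzero coordinate. -/
theorem small2 {N : ℕ} (z : Fin N → ℤ) (h : dot z z = 2) (t : Fin N) (ht : z t ≠ 0) :
    ∃ p π, p ≠ t ∧ z t * z t = 1 ∧ π * π = 1 ∧ z = Pi.single t (z t) + Pi.single p π := by
  have h1 := peel z t
  have h2 : 0 < z t * z t := mul_self_pos.2 ht
  have h3 := sq_le_dot z t
  have h4 : z t * z t = 1 := by
    have : z t * z t ≤ 2 := by omega
    have h5 : z t ≤ 1 := by nlinarith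
    have h6 : -1 ≤ z t := by nlinarith
    interval_cases z t <;> simp_all
  have hne : z - Pi.single t (z t) ≠ 0 := by
    intro h0
    rw [h0, dot_zero_left] at h1
    omega
  obtain ⟨p, π, hp, hπ⟩ := small1 _ (by omega) hne
  refine ⟨p, π, ?_, h4, hπ, ?_⟩
  · rintro rfl
    have := congrFun hp p
    simp at this
    subst this
    simp at hπ
  · rw [← hp]; abel

theorem entries {N : ℕ} (z : Fin N → ℤ) (h : dot z z = (supp z).card) (k : Fin N) :
    z k = 0 ∨ z k = 1 ∨ z k = -1 := by
  by_contra hk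
  push Not at hk
  have h1 : dot z z = ∑ i ∈ supp z, z i * z i := by
    unfold dot
    symm
    apply Finset.sum_subset (Finset.subset_univ _)
    intro i _ hi
    rw [mem_supp] at hi
    simp at hi; simp [hi]
  have h2 : ∑ i ∈ supp z, (1:ℤ) < ∑ i ∈ supp z, z i * z i := by
    apply Finset.sum_lt_sum
    · intro i hi
      rw [mem_supp] at hi
      have : 0 < z i * z i := mul_self_pos.2 hi
      omega
    · refine ⟨k, (mem_supp _ _).2 hk.1, ?_⟩
      rcases lt_or_ge (z k) 0 with h | h
      · have : z k ≤ -2 := by omega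
        nlinarith
      · have : 2 ≤ z k := by omega
        nlinarith
  simp at h2
  omega

theorem dot_inter {N : ℕ} (a b : Fin N → ℤ) :
    dot a b = ∑ i ∈ supp a ∩ supp b, a i * b i := by
  unfold dot
  symm
  apply Finset.sum_subset (Finset.subset_univ _)
  intro i _ hi
  rw [Finset.mem_inter, mem_supp, mem_supp] at hi
  by_cases h : a i = 0
  · simp [h]
  · have : b i = 0 := by tauto
    simp [this]

/-- The main norm estimate. -/
theorem norm_est {N : ℕ} (z c : Fin N → ℤ) (e : Fin N) (hz : dot z c = 0)
    (hc : ∀ k, k ≠ e → -1 ≤ c k ∧ c k ≤ 1) : z e * z e + |c e * z e| ≤ dot z z := by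
  have h1 : dot z z = z e * z e + ∑ k ∈ Finset.univ.erase e, z k * z k :=
    (Finset.add_sum_erase _ (fun k => z k * z k) (Finset.mem_univ e)).symm
  have h2 : dot z c = z e * c e + ∑ k ∈ Finset.univ.erase e, z k * c k :=
    (Finset.add_sum_erase _ (fun k => z k * c k) (Finset.mem_univ e)).symm
  have key : ∀ k, k ≠ e → |z k * c k| ≤ z k * z k := by
    intro k hk
    obtain ⟨h3, h4⟩ := hc k hk
    rw [abs_mul]
    have : |c k| ≤ 1 := abs_le.2 ⟨h3, h4⟩
    calc |z k| * |c k| ≤ |z k| * 1 := by gcongr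
      _ ≤ |z k| * |z k| := by
        by_cases h : z k = 0
        · simp [h]
        · have : 1 ≤ |z k| := Int.one_le_abs h
          gcongr
      _ = z k * z k := abs_mul_abs_self _
  have h5 : |∑ k ∈ Finset.univ.erase e, z k * c k| ≤ ∑ k ∈ Finset.univ.erase e, z k * z k :=
    (Finset.abs_sum_le_sum_abs _ _).trans
      (Finset.sum_le_sum fun k hk => key k (Finset.ne_of_mem_erase hk))
  have h6 : c e * z e = - ∑ k ∈ Finset.univ.erase e, z k * c k := by linarith
  rw [h6, abs_neg]; linarith

/-- Form of a short vector orthogonal to a nonnegative 0/1 vector that meets its support. -/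
def TForm {N : ℕ} (G X : Finset (Fin N)) (z : Fin N → ℤ) : Prop :=
  ∃ i ∈ G, ∃ j ∈ G, ∃ t, t ∉ X ∧ ∃ τ : ℤ, i ≠ j ∧ (τ = 0 ∨ τ = 1 ∨ τ = -1) ∧
    z = Pi.single i 1 - Pi.single j 1 + Pi.single t τ

theorem tform_of {N : ℕ} (X : Finset (Fin N)) (e f : Fin N) (z : Fin N → ℤ)
    (hf : f ∉ X) (hX : ∑ k ∈ X, z k = 0) (he : z e = 0) (hz : dot z z ≤ 3)
    (ht : ∃ k ∈ X, z k ≠ 0) : TForm (X.erase e) X z := by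
  obtain ⟨i, hiX, hi⟩ := Finset.exists_pos_of_sum_zero_of_exists_nonzero z hX ht
  obtain ⟨j, hjX, hj⟩ := Finset.exists_pos_of_sum_zero_of_exists_nonzero (s := X) (fun k => - z k)
    (by simp [hX]) (by obtain ⟨k, hk, h⟩ := ht; exact ⟨k, hk, by simpa using h⟩)
  have hj : z j < 0 := by simpa using hj
  have hij : i ≠ j := by rintro rfl; omega
  have hie : i ≠ e := by rintro rfl; omega
  have hje : j ≠ e := by rintro rfl; omega
  have p1 := peel z i
  set z1 := z - Pi.single i (z i) with hz1
  have hz1j : z1 j = z j := by simp [hz1, hij.symm]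
  have p2 := peel z1 j
  rw [hz1j] at p2
  set r := z1 - Pi.single j (z j) with hr
  have q := dot_self_nonneg r
  have hi1 : z i = 1 := by nlinarith
  have hj1 : z j = -1 := by nlinarith
  rw [hi1] at p1; rw [hj1] at p2
  have hzr : z = Pi.single i 1 - Pi.single j 1 + r := by
    have h0 : z = Pi.single i (z i) + Pi.single j (z j) + r := by rw [hr, hz1]; abel
    rw [hi1, hj1, Pi.single_neg] at h0
    rw [sub_eq_add_neg]; exact h0
  have hiG : i ∈ X.erase e := Finset.mem_erase.2 ⟨hie, hiX⟩
  have hjG : j ∈ X.erase e := Finset.mem_erase.2 ⟨hje, hjX⟩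
  by_cases hr0 : r = 0
  · refine ⟨i, hiG, j, hjG, f, hf, 0, hij, by simp, ?_⟩
    rw [hzr, hr0]; simp
  · obtain ⟨t, τ, hrt, hτ⟩ := small1 r (by omega) hr0
    have hτ' : τ = 1 ∨ τ = -1 := by
      have : (τ - 1) * (τ + 1) = 0 := by linarith
      rcases mul_eq_zero.mp this with h | h
      · left; omega
      · right; omega
    refine ⟨i, hiG, j, hjG, t, ?_, τ, hij, Or.inr hτ', by rw [hzr, hrt]⟩
    intro htX
    rw [hzr, hrt] at hX
    simp [Finset.sum_add_distrib, Finset.sum_sub_distrib, hiX, hjX, htX] at hX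
    subst hX; simp at hτ

end Helpers
section GraphHelpers

variable {C : Config}

theorem three_nbrs (hlin : C.IsLinear) {s a b c : C.V} (ha : C.graph.Adj s a)
    (hb : C.graph.Adj s b) (hc : C.graph.Adj s c) (hab : a ≠ b) (hac : a ≠ c) (hbc : b ≠ c) :
    False := by
  have h1 := hlin.1 s
  unfold Config.deg at h1
  have h2 : ({a, b, c} : Set C.V) ⊆ C.graph.neighborSet s := by
    rintro y (rfl | rfl | rfl) <;> assumption
  have h3 := Set.ncard_le_ncard h2 (Set.toFinite _)
  rw [Set.ncard_eq_three.2 ⟨a, b, c, hab, hac, hbc, rfl⟩] at h3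
  omega

theorem two_nbrs {s a b : C.V} (ha : C.graph.Adj s a)
    (hb : C.graph.Adj s b) (hab : a ≠ b) : 2 ≤ C.deg s := by
  unfold Config.deg
  have h2 : ({a, b} : Set C.V) ⊆ C.graph.neighborSet s := by
    rintro y (rfl | rfl) <;> assumption
  have h3 := Set.ncard_le_ncard h2 (Set.toFinite _)
  rwa [Set.ncard_pair hab] at h3

theorem one_nbr {s a : C.V} (ha : C.graph.Adj s a) : 1 ≤ C.deg s := by
  unfold Config.deg
  exact (Set.ncard_pos (Set.toFinite _)).2 ⟨a, ha⟩

theorem exists_nbr {s : C.V} (h : 1 ≤ C.deg s) : ∃ a, C.graph.Adj s a := by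
  unfold Config.deg at h
  exact (Set.ncard_pos (Set.toFinite _)).1 h

theorem exists_other {s : C.V} (h : 2 ≤ C.deg s) (z : C.V) : ∃ a, C.graph.Adj s a ∧ a ≠ z := by
  unfold Config.deg at h
  obtain ⟨a, ha, h⟩ := Set.exists_ne_of_one_lt_ncard (s := C.graph.neighborSet s) (by omega) z
  exact ⟨a, ha, h⟩

theorem no_tri (hlin : C.IsLinear) {a b c : C.V} (h1 : C.graph.Adj a b) (h2 : C.graph.Adj b c)
    (h3 : C.graph.Adj c a) : False := by
  have n1 := h1.ne
  have n2 := h2.ne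
  have n3 := h3.ne
  apply hlin.2 (SimpleGraph.Walk.cons h1 (.cons h2 (.cons h3 .nil)))
  simp [SimpleGraph.Walk.cons_isCycle_iff, SimpleGraph.Walk.isPath_def]
  grind

theorem no_quad (hlin : C.IsLinear) {a b c d : C.V} (h1 : C.graph.Adj a b)
    (h2 : C.graph.Adj b c) (h3 : C.graph.Adj c d) (h4 : C.graph.Adj d a)
    (hac : a ≠ c) (hbd : b ≠ d) : False := by
  have n1 := h1.ne
  have n2 := h2.ne
  have n3 := h3.ne
  have n4 := h4.ne
  apply hlin.2 (SimpleGraph.Walk.cons h1 (.cons h2 (.cons h3 (.cons h4 .nil))))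
  simp [SimpleGraph.Walk.cons_isCycle_iff, SimpleGraph.Walk.isPath_def]
  grind

theorem no_pent (hlin : C.IsLinear) {a b c d e : C.V} (h1 : C.graph.Adj a b)
    (h2 : C.graph.Adj b c) (h3 : C.graph.Adj c d) (h4 : C.graph.Adj d e) (h5 : C.graph.Adj e a)
    (hac : a ≠ c) (had : a ≠ d) (hbd : b ≠ d) (hbe : b ≠ e) (hce : c ≠ e) : False := by
  have n1 := h1.ne
  have n2 := h2.ne
  have n3 := h3.ne
  have n4 := h4.ne
  have n5 := h5.ne
  apply hlin.2 (SimpleGraph.Walk.cons h1 (.cons h2 (.cons h3 (.cons h4 (.cons h5 .nil)))))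
  simp [SimpleGraph.Walk.cons_isCycle_iff, SimpleGraph.Walk.isPath_def]
  grind

theorem end_lemma (hlin : C.IsLinear) (m : ℕ) (v : ℕ → C.V) (hc : C.IsChain m v)
    (hl : C.IsLeaf (v 0) ∨ (2 ≤ m ∧ C.adjw (v 1) = 0 ∧ C.adjw (v 2) = 0))
    (hr : C.IsLeaf (v m) ∨ (2 ≤ m ∧ C.adjw (v (m - 1)) = 0 ∧ C.adjw (v (m - 2)) = 0))
    (s z y : C.V) (hs : s ∈ C.ebpSet m v) (hz : z ∉ C.ebpSet m v) (hsz : C.graph.Adj s z)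
    (hy : y ∈ C.ebpSet m v) (hsy : C.graph.Adj s y) :
    C.adjw y = 0 ∧ ∀ y', C.graph.Adj y y' → y' ≠ s → C.adjw y' = 0 := by
  obtain ⟨i, hi, rfl⟩ := hs
  have hzn : ∀ j ≤ m, v j ≠ z := fun j hj h => hz ⟨j, hj, h⟩
  have hyz : y ≠ z := fun h => hz (h ▸ hy)
  have hne : ∀ i ≤ m, ∀ j ≤ m, i ≠ j → v i ≠ v j := fun i hi j hj h h' => h (hc.1 i hi j hj h')
  rcases Nat.eq_zero_or_pos m with rfl | hm
  · obtain ⟨j, hj, rfl⟩ := hy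
    have : i = j := by omega
    subst this
    exact absurd hsy (C.graph.irrefl)
  rcases Nat.eq_zero_or_pos i with rfl | hi0
  · have h01 := hc.2 0 hm
    have hy1 : y = v 1 := by
      by_contra h
      exact three_nbrs hlin h01 hsy hsz (Ne.symm h) (hzn 1 hm) hyz
    have h2 := two_nbrs h01 hsz (hzn 1 hm)
    rcases hl with hl | ⟨hm2, hl1, hl2⟩
    · unfold Config.IsLeaf at hl; omega
    subst hy1
    refine ⟨hl1, fun y' hy' hne' => ?_⟩
    have h12 := hc.2 1 (by omega)
    have : y' = v 2 := by
      by_contra h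
      exact three_nbrs hlin h01.symm h12 hy' (hne 0 (by omega) 2 (by omega) (by omega))
        (Ne.symm hne') (Ne.symm h)
    rw [this]; exact hl2
  rcases Nat.lt_or_ge i m with him | him
  · exfalso
    have h1 := hc.2 (i - 1) (by omega)
    rw [Nat.sub_add_cancel hi0] at h1
    have h2 := hc.2 i him
    exact three_nbrs hlin h1.symm h2 hsz (hne (i-1) (by omega) (i+1) (by omega) (by omega))
      (hzn _ (by omega)) (hzn _ (by omega))
  · have : i = m := by omega
    subst this
    have h01 := hc.2 (i-1) (by omega)
    rw [Nat.sub_add_cancel hi0] at h01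
    replace h01 := h01.symm
    have hz1 := hzn (i-1) (by omega)
    have hy1 : y = v (i-1) := by
      by_contra h
      exact three_nbrs hlin h01 hsy hsz (Ne.symm h) hz1 hyz
    have h2 := two_nbrs h01 hsz hz1
    rcases hr with hl | ⟨hm2, hl1, hl2⟩
    · unfold Config.IsLeaf at hl; omega
    subst hy1
    refine ⟨hl1, fun y' hy' hne' => ?_⟩
    have h12 := hc.2 (i-2) (by omega)
    rw [show i - 2 + 1 = i - 1 by omega] at h12
    have : y' = v (i-2) := by
      by_contra h
      exact three_nbrs hlin h01.symm h12.symm hy' (hne i (by omega) (i-2) (by omega) (by omega))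
        (Ne.symm hne') (Ne.symm h)
    rw [this]; exact hl2

theorem bad_flag : ∀ p ∈ badPatterns, ∀ i : Fin p.length, (p.get i).2 = true →
    0 < i.val ∧ i.val + 1 < p.length ∧ 0 ≤ (p.get i).1 ∧ (p.get i).1 ≤ 2 := by
  decide

theorem bad_lemma (hlin : C.IsLinear) (hwc : C.WorkingConditions) (m : ℕ) (v : ℕ → C.V)
    (hc : C.IsEBPCand m v) (b : C.V) (hb : C.IsBad b) :
    b ∈ C.ebpSet m v ∧ (∀ y, C.graph.Adj b y → y ∈ C.ebpSet m v) ∧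
      0 ≤ C.adjw b ∧ C.adjw b ≤ 2 := by
  obtain ⟨p, hp, mb, vb, hbp⟩ := hwc.2.2.2.2.2.2.2 ⟨b, hb⟩
  have hsub := hc.2.1 p hp mb vb hbp
  obtain ⟨hch, hlen, hw, hbd⟩ := hbp
  obtain ⟨i, hif, rfl⟩ := (hbd b).1 hb
  obtain ⟨h1, h2, h3, h4⟩ := bad_flag p hp i hif
  refine ⟨hsub i (by omega), fun y hy => ?_, ?_, ?_⟩
  · have a1 := hch.2 (i-1) (by omega)
    rw [Nat.sub_add_cancel h1] at a1
    have a2 := hch.2 i (by omega)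
    by_cases e1 : y = vb (i - 1)
    · rw [e1]; exact hsub _ (by omega)
    by_cases e2 : y = vb (i + 1)
    · rw [e2]; exact hsub _ (by omega)
    exfalso
    refine three_nbrs hlin a1.symm a2 hy ?_ (Ne.symm e1) (Ne.symm e2)
    intro h
    have := hch.1 _ (by omega) _ (by omega) h
    omega
  · rw [hw i]; exact h3
  · rw [hw i]; exact h4

end GraphHelpers
section Core

theorem eval_form {N : ℕ} (a b s : Fin N) (σ : ℤ) (k : Fin N) :
    (Pi.single a (1:ℤ) - Pi.single b (1:ℤ) + Pi.single s σ : Fin N → ℤ) k =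
      (if k = a then 1 else 0) - (if k = b then 1 else 0) + (if k = s then σ else 0) := by
  simp [Pi.single_apply]

theorem dot_form {N : ℕ} (a b s : Fin N) (σ : ℤ) (y : Fin N → ℤ) :
    dot (Pi.single a (1:ℤ) - Pi.single b (1:ℤ) + Pi.single s σ : Fin N → ℤ) y =
      y a - y b + σ * y s := by
  rw [dot_add_left, dot_sub_left, dot_single, dot_single, dot_single]; ring

theorem card_two_aux {α : Type*} [DecidableEq α] (G : Finset α) (hG : G.card ≤ 2) {i j a : α}
    (hi : i ∈ G) (hj : j ∈ G) (ha : a ∈ G) (hij : i ≠ j) : a = i ∨ a = j := by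
  by_contra h
  push Not at h
  have h1 : ({i, j, a} : Finset α) ⊆ G := by
    intro y hy; simp at hy; rcases hy with rfl | rfl | rfl <;> assumption
  have h2 := Finset.card_le_card h1
  rw [Finset.card_eq_three.2 ⟨i, j, a, hij, h.1.symm, h.2.symm, rfl⟩] at h2
  omega

theorem card_three_aux {α : Type*} [DecidableEq α] (G : Finset α) (hG : G.card ≤ 3) {i j a b : α}
    (hi : i ∈ G) (hj : j ∈ G) (ha : a ∈ G) (hb : b ∈ G) (hij : i ≠ j) (hab : a ≠ b) :
    a = i ∨ a = j ∨ b = i ∨ b = j := by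
  by_contra h
  push Not at h
  have h1 : ({i, j, a} : Finset α) ⊆ G.erase b := by
    intro y hy; simp at hy
    rcases hy with rfl | rfl | rfl <;> rw [Finset.mem_erase]
    · exact ⟨h.2.2.1.symm, hi⟩
    · exact ⟨h.2.2.2.symm, hj⟩
    · exact ⟨hab, ha⟩
  have h2 := Finset.card_le_card h1
  rw [Finset.card_eq_three.2 ⟨i, j, a, hij, h.1.symm, h.2.1.symm, rfl⟩,
    Finset.card_erase_of_mem hb] at h2
  omega

/-- Orthogonal short vectors over a three-element set. -/
theorem orth_three {N : ℕ} (G : Finset (Fin N)) (hG : G.card ≤ 3) (i j a b t s : Fin N) (τ σ : ℤ)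
    (hi : i ∈ G) (hj : j ∈ G) (ha : a ∈ G) (hb : b ∈ G) (hij : i ≠ j) (hab : a ≠ b)
    (ht : t ∉ G) (hs : s ∉ G)
    (h : dot (Pi.single i (1:ℤ) - Pi.single j (1:ℤ) + Pi.single t τ : Fin N → ℤ)
      (Pi.single a (1:ℤ) - Pi.single b (1:ℤ) + Pi.single s σ : Fin N → ℤ) = 0) :
    t = s ∧ τ ≠ 0 ∧ σ ≠ 0 := by
  have h4 := card_three_aux G hG hi hj ha hb hij hab
  rw [dot_form, eval_form, eval_form, eval_form] at h
  have n1 : i ≠ s := fun h => hs (h ▸ hi)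
  have n2 : j ≠ s := fun h => hs (h ▸ hj)
  have n3 : t ≠ a := fun h => ht (h ▸ ha)
  have n4 : t ≠ b := fun h => ht (h ▸ hb)
  rw [if_neg n1, if_neg n2, if_neg n3, if_neg n4] at h
  by_contra hcon
  have hz : τ * (0 - 0 + if t = s then σ else 0) = 0 := by
    split_ifs with hts
    · have : τ = 0 ∨ σ = 0 := by tauto
      rcases this with h | h <;> simp [h]
    · simp
  rw [hz] at h
  split_ifs at h <;> grind

theorem dot_two {N : ℕ} (G : Finset (Fin N)) (hG : G.card ≤ 2) (i j a b t s : Fin N) (τ σ : ℤ)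
    (hi : i ∈ G) (hj : j ∈ G) (ha : a ∈ G) (hb : b ∈ G) (hij : i ≠ j) (hab : a ≠ b)
    (ht : t ∉ G) (hs : s ∉ G) :
    ∃ ε : ℤ, (ε = 1 ∨ ε = -1) ∧
    (Pi.single a (1:ℤ) - Pi.single b (1:ℤ) + Pi.single s σ : Fin N → ℤ) i = ε ∧
    (Pi.single a (1:ℤ) - Pi.single b (1:ℤ) + Pi.single s σ : Fin N → ℤ) j = -ε ∧ 
    dot (Pi.single i (1:ℤ) - Pi.single j (1:ℤ) + Pi.single t τ : Fin N → ℤ)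
      (Pi.single a (1:ℤ) - Pi.single b (1:ℤ) + Pi.single s σ : Fin N → ℤ) =
      2 * ε + if t = s then τ * σ else 0 := by
  have h1 := card_two_aux G hG hi hj ha hij
  have h2 := card_two_aux G hG hi hj hb hij
  simp only [dot_form, eval_form]
  have n1 : i ≠ s := fun h => hs (h ▸ hi)
  have n2 : j ≠ s := fun h => hs (h ▸ hj)
  have n3 : t ≠ a := fun h => ht (h ▸ ha)
  have n4 : t ≠ b := fun h => ht (h ▸ hb)
  rw [if_neg n1, if_neg n2, if_neg n3, if_neg n4]
  rcases h1 with rfl | rfl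
  · have : b = j := by grind
    subst this
    refine ⟨1, by simp, ?_⟩
    simp [hij, hij.symm]
  · have : b = i := by grind
    subst this
    refine ⟨-1, by simp, ?_⟩
    simp [hij, hij.symm]

/-- All the facts about the local picture around `x` that are used. -/
structure Ctx (C : Config) (N : ℕ) (φ : C.V → Fin N → ℤ) (S : Set C.V) (x u1 u2 : C.V)
    (e f : Fin N) : Prop where
  lin : C.IsLinear
  emb : C.IsEmbedding N φ
  w2 : ∀ v : C.V, 2 ≤ C.w v
  le3 : ∀ v : C.V, C.adjw v ≤ 3
  xS : x ∈ S
  u1S : u1 ∈ S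
  u2S : u2 ∈ S
  a1 : C.graph.Adj x u1
  a2 : C.graph.Adj x u2
  u12 : u1 ≠ u2
  p1 : 0 < C.adjw u1
  p2 : 0 < C.adjw u2
  endl : ∀ s z y : C.V, s ∈ S → z ∉ S → C.graph.Adj s z → y ∈ S → C.graph.Adj s y →
    C.adjw y = 0 ∧ ∀ y', C.graph.Adj y y' → y' ≠ s → C.adjw y' = 0
  badl : ∀ b, C.IsBad b → b ∈ S ∧ ∀ y, C.graph.Adj b y → y ∈ S
  semi : ∀ u ∈ S, ∀ v ∈ S,
    ((supp (φ u) ∩ supp (φ v)).card : ℤ) =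
      if u = v then C.w v
      else if C.graph.Adj u v then 1
      else if C.graph.Adj x u ∧ C.graph.Adj x v then 2
      else 0
  x01 : ∀ k, φ x k = 0 ∨ φ x k = 1
  xe : φ x e = 1
  xf : φ x f = 0
  u1e : φ u1 e = -1
  u2e : φ u2 e = -1
  u1x : ∀ k, k ≠ e → φ x k ≠ 0 → φ u1 k = 0
  u2x : ∀ k, k ≠ e → φ x k ≠ 0 → φ u2 k = 0
  u1f : φ u1 f ≠ 0
  uf : φ u1 f + φ u2 f = 0
  uk : ∀ k, k ≠ e → k ≠ f → φ u1 k = 0 ∨ φ u2 k = 0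

namespace Ctx

variable {C : Config} {N : ℕ} {φ : C.V → Fin N → ℤ} {S : Set C.V} {x u1 u2 : C.V} {e f : Fin N}

theorem symm (h : Ctx C N φ S x u1 u2 e f) : Ctx C N φ S x u2 u1 e f where
  lin := h.lin
  emb := h.emb
  w2 := h.w2
  le3 := h.le3
  xS := h.xS
  u1S := h.u2S
  u2S := h.u1S
  a1 := h.a2
  a2 := h.a1
  u12 := h.u12.symm
  p1 := h.p2
  p2 := h.p1
  endl := h.endl
  badl := h.badl
  semi := h.semi
  x01 := h.x01
  xe := h.xe
  xf := h.xf
  u1e := h.u2e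
  u2e := h.u1e
  u1x := h.u2x
  u2x := h.u1x
  u1f := by have := h.uf; have := h.u1f; omega
  uf := by have := h.uf; omega
  uk := fun k h1 h2 => (h.uk k h1 h2).symm

theorem fe (h : Ctx C N φ S x u1 u2 e f) : f ≠ e := by
  rintro rfl
  have := h.xe; have := h.xf; omega

theorem ent (h : Ctx C N φ S x u1 u2 e f) {s : C.V} (hs : s ∈ S) (k : Fin N) :
    φ s k = 0 ∨ φ s k = 1 ∨ φ s k = -1 := by
  apply entries
  have h1 := h.semi s hs s hs
  rw [if_pos rfl, Finset.inter_self] at h1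
  rw [h.emb, if_pos rfl, h1]

theorem dself (h : Ctx C N φ S x u1 u2 e f) (s : C.V) : dot (φ s) (φ s) = C.w s := by
  rw [h.emb, if_pos rfl]

theorem dadj (h : Ctx C N φ S x u1 u2 e f) {s t : C.V} (a : C.graph.Adj s t) :
    dot (φ s) (φ t) = -1 := by
  rw [h.emb, if_neg a.ne, if_pos a]

theorem dzero (h : Ctx C N φ S x u1 u2 e f) {s t : C.V} (hne : s ≠ t) (a : ¬ C.graph.Adj s t) :
    dot (φ s) (φ t) = 0 := by
  rw [h.emb, if_neg hne, if_neg a]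

theorem disj (h : Ctx C N φ S x u1 u2 e f) {s t : C.V} (hs : s ∈ S) (ht : t ∈ S) (hne : s ≠ t)
    (a : ¬ C.graph.Adj s t) (b : ¬ (C.graph.Adj x s ∧ C.graph.Adj x t)) (k : Fin N) :
    φ s k = 0 ∨ φ t k = 0 := by
  have h1 := h.semi s hs t ht
  rw [if_neg hne, if_neg a, if_neg b] at h1
  have h2 : supp (φ s) ∩ supp (φ t) = ∅ := Finset.card_eq_zero.1 (by exact_mod_cast h1)
  by_contra hk
  push Not at hk
  have : k ∈ supp (φ s) ∩ supp (φ t) := by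
    rw [Finset.mem_inter, mem_supp, mem_supp]; exact hk
  rw [h2] at this; simp at this

theorem xnbr (h : Ctx C N φ S x u1 u2 e f) {u : C.V} (a : C.graph.Adj x u) : u = u1 ∨ u = u2 := by
  by_contra hc
  push Not at hc
  exact three_nbrs h.lin h.a1 h.a2 a h.u12 hc.1.symm hc.2.symm

theorem other (h : Ctx C N φ S x u1 u2 e f) {s : C.V} (hs : s ∈ S) (hx : s ≠ x)
    (a : ¬ C.graph.Adj x s) (k : Fin N) (hk : φ x k ≠ 0) : φ s k = 0 := by
  rcases h.disj hs h.xS hx (fun b => a b.symm) (fun b => a b.1) k with h1 | h1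
  · exact h1
  · exact absurd h1 hk

theorem end1 (h : Ctx C N φ S x u1 u2 e f) {u z : C.V} (a : C.graph.Adj x u)
    (b : C.graph.Adj u z) : z ∈ S := by
  by_contra hz
  rcases h.xnbr a with rfl | rfl
  · have h1 := (h.endl u z x h.u1S hz b h.xS a.symm).2 u2 h.a2 h.u12.symm
    have := h.p2; omega
  · have h1 := (h.endl u z x h.u2S hz b h.xS a.symm).2 u1 h.a1 h.u12
    have := h.p1; omega

theorem nbrS (h : Ctx C N φ S x u1 u2 e f) {u : C.V} (a : C.graph.Adj x u) : u ∈ S := by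
  rcases h.xnbr a with rfl | rfl
  · exact h.u1S
  · exact h.u2S

theorem nbrpos (h : Ctx C N φ S x u1 u2 e f) {u : C.V} (a : C.graph.Adj x u) : 0 < C.adjw u := by
  rcases h.xnbr a with rfl | rfl
  · exact h.p1
  · exact h.p2

theorem end2 (h : Ctx C N φ S x u1 u2 e f) {u y z : C.V} (a : C.graph.Adj x u)
    (b : C.graph.Adj u y) (c : C.graph.Adj y z) : z ∈ S := by
  by_contra hz
  have h1 := (h.endl y z u (h.end1 a b) hz c (h.nbrS a) b.symm).1
  have := h.nbrpos a; omega

theorem out (h : Ctx C N φ S x u1 u2 e f) {z : C.V} (hz : z ∉ S) :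
    z ≠ x ∧ ¬ C.graph.Adj x z ∧ dot (φ z) (φ x) = 0 ∧ dot (φ z) (φ u1) = 0 ∧
      dot (φ z) (φ u2) = 0 := by
  have n0 : z ≠ x := fun e => hz (e ▸ h.xS)
  have n1 : z ≠ u1 := fun e => hz (e ▸ h.u1S)
  have n2 : z ≠ u2 := fun e => hz (e ▸ h.u2S)
  have b0 : ¬ C.graph.Adj x z := fun a => hz (h.nbrS a)
  exact ⟨n0, b0, h.dzero n0 fun a => b0 a.symm, h.dzero n1 fun a => hz (h.end1 h.a1 a.symm),
    h.dzero n2 fun a => hz (h.end1 h.a2 a.symm)⟩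

theorem sumX (h : Ctx C N φ S x u1 u2 e f) (z : Fin N → ℤ) :
    dot z (φ x) = ∑ k ∈ supp (φ x), z k := by
  have h1 : dot z (φ x) = ∑ k ∈ supp (φ x), z k * φ x k := by
    unfold dot
    symm
    apply Finset.sum_subset (Finset.subset_univ _)
    intro i _ hi
    rw [mem_supp] at hi
    push Not at hi
    simp [hi]
  rw [h1]
  apply Finset.sum_congr rfl
  intro k hk
  rw [mem_supp] at hk
  rcases h.x01 k with h2 | h2
  · exact absurd h2 hk
  · rw [h2, mul_one]

theorem ze (h : Ctx C N φ S x u1 u2 e f) {z : C.V} (hz : z ∉ S) (hw : C.w z ≤ 3) :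
    φ z e = 0 := by
  obtain ⟨_, _, d0, d1, d2⟩ := h.out hz
  have hc : dot (φ z) (φ u1 + φ u2 - φ x) = 0 := by
    rw [dot_comm', dot_sub_left, dot_add_left, dot_comm' _ (φ z), dot_comm' _ (φ z),
      dot_comm' _ (φ z), d0, d1, d2]; rfl
  have h1 := norm_est (φ z) (φ u1 + φ u2 - φ x) e hc (by
    intro k hk
    simp only [Pi.sub_apply, Pi.add_apply]
    by_cases hf : k = f
    · subst hf; have := h.uf; have := h.xf; omega
    have b1 := h.ent h.u1S k
    have b2 := h.ent h.u2S k
    have b3 := h.x01 k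
    have b4 := h.uk k hk hf
    have b5 := h.u1x k hk
    have b6 := h.u2x k hk
    omega)
  simp only [Pi.sub_apply, Pi.add_apply, h.u1e, h.u2e, h.xe, h.dself] at h1
  rw [abs_mul] at h1
  norm_num at h1
  by_contra h0
  have := Int.one_le_abs h0
  have := mul_self_pos.2 h0
  omega

theorem wle (h : Ctx C N φ S x u1 u2 e f) {z : C.V} (hz : C.adjw z ≤ 1) : C.w z ≤ 3 := by
  have := h.lin.1 z
  unfold Config.adjw at hz
  omega

theorem wnn (h : Ctx C N φ S x u1 u2 e f) (z : C.V) : 0 ≤ C.adjw z := by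
  have := h.lin.1 z
  have := h.w2 z
  unfold Config.adjw
  omega

theorem tform (h : Ctx C N φ S x u1 u2 e f) {z : C.V} (hz : z ∉ S) (hw : C.w z ≤ 3)
    (ht : ∃ k ∈ supp (φ x), φ z k ≠ 0) : TForm ((supp (φ x)).erase e) (supp (φ x)) (φ z) := by
  apply tform_of (supp (φ x)) e f
  · rw [mem_supp]; simp [h.xf]
  · rw [← h.sumX]; exact (h.out hz).2.2.1
  · exact h.ze hz hw
  · rw [h.dself]; exact hw
  · exact ht

theorem cardG (h : Ctx C N φ S x u1 u2 e f) :
    (((supp (φ x)).erase e).card : ℤ) = C.adjw x + 1 := by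
  have h1 := h.semi x h.xS x h.xS
  rw [if_pos rfl, Finset.inter_self] at h1
  have he : e ∈ supp (φ x) := by rw [mem_supp, h.xe]; simp
  have h2 := Finset.card_erase_add_one he
  have h3 := two_nbrs h.a1 h.a2 h.u12
  have h4 := h.lin.1 x
  unfold Config.adjw
  omega

/-- The auxiliary vector next to `u1`. -/
theorem aux (h : Ctx C N φ S x u1 u2 e f) (hu : C.adjw u1 = 1) {v : C.V} (hv : v ∉ S) :
    ∃ Y : Fin N → ℤ, dot (φ v) Y = 0 ∧ Y e = 0 ∧ Y f = 0 ∧ (∀ k, φ x k ≠ 0 → Y k = 0) ∧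
      (∀ k, Y k = 0 ∨ φ u2 k = 0) ∧
      (∀ k, k ≠ e → k ≠ f → -1 ≤ 2 * φ u1 k + Y k ∧ 2 * φ u1 k + Y k ≤ 1) ∧
      (Y = 0 ∨ ∃ y, Y = φ y ∧ C.graph.Adj u1 y ∧ y ≠ x) := by
  have hcard := h.semi u1 h.u1S u1 h.u1S
  rw [if_pos rfl, Finset.inter_self] at hcard
  have hd1 := one_nbr h.a1.symm
  have hd2 := h.lin.1 u1
  have hes : e ∈ supp (φ u1) := by rw [mem_supp, h.u1e]; simp
  have hfs : f ∈ supp (φ u1) := by rw [mem_supp]; exact h.u1f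
  unfold Config.adjw at hu
  rcases (by omega : C.deg u1 = 1 ∨ C.deg u1 = 2) with hd | hd
  · have hs : ∀ k, k ≠ e → k ≠ f → φ u1 k = 0 := by
      intro k hke hkf
      by_contra hk
      rcases card_two_aux (supp (φ u1)) (by omega) hes hfs ((mem_supp _ _).2 hk) h.fe.symm with
        h1 | h1
      · exact hke h1
      · exact hkf h1
    refine ⟨0, by rw [dot_comm', dot_zero_left], rfl, rfl, fun _ _ => rfl, fun _ => Or.inl rfl,
      ?_, Or.inl rfl⟩
    intro k hke hkf
    rw [hs k hke hkf]; simp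
  · obtain ⟨y, hy, hyx⟩ := exists_other (s := u1) (by omega) x
    have hyS := h.end1 h.a1 hy
    have hxy : ¬ C.graph.Adj x y := fun a => no_tri h.lin h.a1 hy a.symm
    have hyu2 : y ≠ u2 := by rintro rfl; exact hxy h.a2
    have hyadj : ¬ C.graph.Adj y u2 := fun a =>
      no_quad h.lin h.a1 hy a h.a2.symm hyx.symm h.u12
    have dx : ∀ k, φ x k ≠ 0 → φ y k = 0 := h.other hyS hyx hxy
    have du2 : ∀ k, φ y k = 0 ∨ φ u2 k = 0 :=
      h.disj hyS h.u2S hyu2 hyadj fun a => hxy a.1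
    have hye : φ y e = 0 := dx e (by rw [h.xe]; simp)
    have hyf : φ y f = 0 := by
      rcases du2 f with h1 | h1
      · exact h1
      · exact absurd h1 h.symm.u1f
    have hvy : v ≠ y := fun a => hv (a ▸ hyS)
    have hvy' : dot (φ v) (φ y) = 0 := h.dzero hvy fun a => hv (h.end2 h.a1 hy a.symm)
    have h1 := h.semi u1 h.u1S y hyS
    rw [if_neg hy.ne, if_pos hy] at h1
    obtain ⟨g, hg⟩ := Finset.card_eq_one.1 (show (supp (φ u1) ∩ supp (φ y)).card = 1 by
      exact_mod_cast h1)
    have h2 := dot_inter (φ u1) (φ y)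
    rw [hg, Finset.sum_singleton, h.dadj hy] at h2
    have hgm : g ∈ supp (φ u1) ∩ supp (φ y) := by rw [hg]; simp
    rw [Finset.mem_inter, mem_supp, mem_supp] at hgm
    have hge : g ≠ e := by rintro rfl; exact hgm.2 hye
    have hgf : g ≠ f := by rintro rfl; exact hgm.2 hyf
    refine ⟨φ y, hvy', hye, hyf, dx, du2, ?_, Or.inr ⟨y, rfl, hy, hyx⟩⟩
    intro k hke hkf
    have b2 := h.ent hyS k
    by_cases hk : φ u1 k = 0
    · omega
    have hkg : k = g := by
      by_contra hkg
      have := card_three_aux (supp (φ u1)) (by omega) hes hfs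
        ((mem_supp _ _).2 hgm.1) ((mem_supp _ _).2 hk) h.fe.symm (Ne.symm hkg)
      tauto
    subst hkg
    have b1 := h.ent h.u1S k
    rcases b1 with b1 | b1 | b1 <;> rw [b1] at h2 ⊢ <;> omega

theorem heavy (h : Ctx C N φ S x u1 u2 e f) (h1 : C.adjw u1 = 1)
    (h2 : C.adjw u2 = 1) {v : C.V} (hv : v ∉ S) : φ v e = 0 := by
  obtain ⟨Y, y1, y2, y3, y4, y5, y6, y7⟩ := h.aux h1 hv
  obtain ⟨Z, z1, z2, z3, z4, z5, z6, z7⟩ := h.symm.aux h2 hv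
  obtain ⟨_, _, d0, d1, d2⟩ := h.out hv
  have hYZ : ∀ k, Y k = 0 ∨ Z k = 0 := by
    rcases y7 with rfl | ⟨y, rfl, hy, hyx⟩
    · exact fun k => Or.inl rfl
    rcases z7 with rfl | ⟨z, rfl, hz, hzx⟩
    · exact fun k => Or.inr rfl
    have n1 : y ≠ z := by
      rintro rfl
      exact no_quad h.lin h.a1 hy hz.symm h.a2.symm hyx.symm h.u12
    have n3 : ¬ C.graph.Adj x y := fun a => no_tri h.lin h.a1 hy a.symm
    have n4 : ¬ C.graph.Adj x z := fun a => no_tri h.lin h.a2 hz a.symm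
    have n5 : u1 ≠ z := by rintro rfl; exact n4 h.a1
    have n6 : y ≠ u2 := by rintro rfl; exact n3 h.a2
    have n2 : ¬ C.graph.Adj y z := fun a =>
      no_pent h.lin h.a1 hy a hz.symm h.a2.symm hyx.symm hzx.symm n5 h.u12 n6
    exact h.disj (h.end1 h.a1 hy) (h.end1 h.a2 hz) n1 n2 fun a => n3 a.1
  have hc : dot (φ v) ((2:ℤ) • φ u1 + (2:ℤ) • φ u2 + Y + Z - φ x) = 0 := by
    rw [dot_comm', dot_sub_left, dot_add_left, dot_add_left, dot_add_left, dot_smul_left,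
      dot_smul_left, dot_comm' _ (φ v), dot_comm' _ (φ v),
      dot_comm' _ (φ v), dot_comm' _ (φ v), dot_comm' _ (φ v), d0, d1, d2, y1, z1]; rfl
  have h1 := norm_est (φ v) _ e hc (by
    intro k hk
    simp only [Pi.sub_apply, Pi.add_apply, Pi.smul_apply, smul_eq_mul]
    by_cases hf : k = f
    · subst hf; have := h.uf; have := h.xf; omega
    have b3 := h.x01 k
    have b4 := h.uk k hk hf
    have b5 := h.u1x k hk
    have b6 := h.u2x k hk
    have c1 := y4 k
    have c2 := z4 k
    have c3 := y5 k
    have c4 := z5 k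
    have c5 := y6 k hk hf
    have c6 := z6 k hk hf
    have c7 := hYZ k
    omega)
  simp only [Pi.sub_apply, Pi.add_apply, Pi.smul_apply, smul_eq_mul, h.u1e, h.u2e, h.xe,
    h.dself, y2, z2] at h1
  rw [abs_mul] at h1
  norm_num at h1
  by_contra h0
  have := Int.one_le_abs h0
  have := mul_self_pos.2 h0
  have := h.lin.1 v
  have := h.le3 v
  unfold Config.adjw at this
  omega

end Ctx

end Core
section Final

namespace Ctx

variable {C : Config} {N : ℕ} {φ : C.V → Fin N → ℤ} {S : Set C.V} {x u1 u2 : C.V} {e f : Fin N}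

theorem dich (h : Ctx C N φ S x u1 u2 e f)
    (hy1 : ∀ y, y ≠ x → ¬ C.graph.Adj x y → C.adjw y ≤ 1) {y : C.V} (hy : y ≠ x) :
    (∀ k ∈ (supp (φ x)).erase e, φ y k = 0) ∨
      (y ∉ S ∧ TForm ((supp (φ x)).erase e) (supp (φ x)) (φ y)) := by
  by_cases hS : y ∈ S
  · left
    intro k hk
    rw [Finset.mem_erase, mem_supp] at hk
    by_cases ha : C.graph.Adj x y
    · rcases h.xnbr ha with rfl | rfl
      · exact h.u1x k hk.1 hk.2
      · exact h.u2x k hk.1 hk.2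
    · exact h.other hS hy ha k hk.2
  · by_cases ht : ∃ k ∈ supp (φ x), φ y k ≠ 0
    · right
      exact ⟨hS, h.tform hS (h.wle (hy1 y hy (h.out hS).2.1)) ht⟩
    · left
      intro k hk
      by_contra hne
      exact ht ⟨k, Finset.mem_of_mem_erase hk, hne⟩

theorem wform (h : Ctx C N φ S x u1 u2 e f) {v : C.V} {i j t : Fin N} {τ : ℤ}
    (hi : i ∈ (supp (φ x)).erase e) (hj : j ∈ (supp (φ x)).erase e) (ht : t ∉ supp (φ x))
    (hij : i ≠ j) (hv : φ v = Pi.single i 1 - Pi.single j 1 + Pi.single t τ) :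
    C.w v = 2 + τ * τ := by
  rw [← h.dself]
  have n1 : i ≠ t := fun a => ht (a ▸ Finset.mem_of_mem_erase hi)
  have n2 : j ≠ t := fun a => ht (a ▸ Finset.mem_of_mem_erase hj)
  rw [hv, dot_form, eval_form, eval_form, eval_form]
  simp [n1, n2, n1.symm, n2.symm, hij, hij.symm]

set_option maxHeartbeats 1000000 in
theorem final1 (h : Ctx C N φ S x u1 u2 e f) (hx : C.adjw x = 1)
    (hy1 : ∀ y, y ≠ x → ¬ C.graph.Adj x y → C.adjw y ≤ 1) {v : C.V} (hv : v ∉ S)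
    (htf : TForm ((supp (φ x)).erase e) (supp (φ x)) (φ v)) : False := by
  have hG : ((supp (φ x)).erase e).card ≤ 2 := by have := h.cardG; omega
  set G := (supp (φ x)).erase e with hGdef
  have hGX : ∀ k, k ∉ supp (φ x) → k ∉ G := fun k hk a => hk (Finset.mem_of_mem_erase a)
  obtain ⟨i, hi, j, hj, t, ht, τ, hij, hτ, hform⟩ := htf
  obtain ⟨hvx, hvx', -, -, -⟩ := h.out hv
  have hwv := h.wform hi hj ht hij hform
  have hv1 := hy1 v hvx hvx'
  have hdv := h.lin.1 v
  -- facts about neighbours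
  have nx : ∀ z, C.graph.Adj v z → z ≠ x := by
    rintro z a rfl; exact hvx' a.symm
  have nx' : ∀ z, C.graph.Adj v z → ¬ C.graph.Adj x z := fun z a b => hv (h.end1 b a.symm)
  have D : ∀ y, (∀ k ∈ G, φ y k = 0) → dot (φ v) (φ y) = τ * φ y t := by
    intro y hy
    rw [hform, dot_form, hy i hi, hy j hj]; ring
  have T : ∀ y y', TForm G (supp (φ x)) (φ y) → TForm G (supp (φ x)) (φ y') →
      dot (φ y) (φ y') ≠ 0 := by
    rintro y y' ⟨a, ha, b, hb, s, hs, σ, hab, hσ, hy⟩ ⟨a', ha', b', hb', s', hs', σ', hab', hσ', hy'⟩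
    obtain ⟨ε, hε, -, -, hd⟩ := dot_two G hG a b a' b' s s' σ σ' ha hb ha' hb' hab hab'
      (hGX _ hs) (hGX _ hs')
    rw [hy, hy', hd]
    rcases hε with rfl | rfl <;> rcases hσ with rfl | rfl | rfl <;>
      rcases hσ' with rfl | rfl | rfl <;> split_ifs <;> norm_num
  have hvT : TForm G (supp (φ x)) (φ v) := ⟨i, hi, j, hj, t, ht, τ, hij, hτ, hform⟩
  have nt : ∀ y, y ≠ x → y ≠ v → ¬ C.graph.Adj v y → ∀ k ∈ G, φ y k = 0 := by
    intro y h1 h2 h3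
    rcases h.dich hy1 h1 with h4 | h4
    · exact h4
    · exact absurd (h.dzero h2.symm h3) (T _ _ hvT h4.2)
  have hτ0 : τ ≠ 0 := by
    rintro rfl
    obtain ⟨z, hz⟩ := exists_nbr (s := v) (by
      have := h.w2 v
      unfold Config.adjw at hv1
      omega)
    have hd := h.dadj hz
    rcases h.dich hy1 (nx z hz) with h4 | ⟨_, a, ha, b, hb, s, hs, σ, hab, hσ, hy⟩
    · rw [D z h4] at hd; simp at hd
    · obtain ⟨ε, hε, -, -, hd'⟩ := dot_two G hG i j a b t s 0 σ hi hj ha hb hij hab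
        (hGX _ ht) (hGX _ hs)
      rw [← hform, ← hy, hd] at hd'
      simp at hd'
      omega
  have hττ : τ * τ = 1 := by rcases hτ with rfl | rfl | rfl <;> simp_all
  have hdeg : C.deg v = 2 := by
    unfold Config.adjw at hv1
    omega
  have hadv : C.adjw v = 1 := by
    unfold Config.adjw
    omega
  have ntn : ∀ z z', C.graph.Adj v z → C.graph.Adj v z' → z ≠ z' → ∀ k ∈ G, φ z k = 0 := by
    intro z z' hz hz' hne
    have hd := h.dadj hz
    have hd' := h.dadj hz'
    have hzz : dot (φ z) (φ z') = 0 := h.dzero hne fun a => no_tri h.lin hz a hz'.symm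
    rcases h.dich hy1 (nx z hz) with h4 | ⟨_, h5⟩
    · exact h4
    exfalso
    rcases h.dich hy1 (nx z' hz') with h6 | h6
    · obtain ⟨a, ha, b, hb, s, hs, σ, hab, hσ, hy⟩ := h5
      obtain ⟨ε, hε, -, -, hd2⟩ := dot_two G hG i j a b t s τ σ hi hj ha hb hij hab
        (hGX _ ht) (hGX _ hs)
      rw [← hform, ← hy, hd] at hd2
      rw [D z' h6] at hd'
      rw [hy, dot_form, h6 a ha, h6 b hb] at hzz
      split_ifs at hd2 with hts
      · subst hts
        have : σ = 0 := by
          have : φ z' t ≠ 0 := by intro h0; rw [h0] at hd'; simp at hd'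
          have h7 : σ * φ z' t = 0 := by linarith
          rcases mul_eq_zero.1 h7 with h8 | h8
          · exact h8
          · exact absurd h8 this
        subst this
        omega
      · omega
    · exact T _ _ h5 h6.2 hzz
  have key : ∀ z1 z2, C.graph.Adj v z1 → C.graph.Adj v z2 → z1 ≠ z2 → C.adjw z1 = 0 → False := by
    intro z1 z2 hz1 hz2 hne h10
    have t1 := ntn z1 z2 hz1 hz2 hne
    have t2 := ntn z2 z1 hz2 hz1 hne.symm
    have d1 := h.dadj hz1
    have d2 := h.dadj hz2
    rw [D _ t1] at d1
    rw [D _ t2] at d2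
    have e1 : φ z1 t = -τ := by rcases hτ with rfl | rfl | rfl <;> omega
    have e2 : φ z2 t = -τ := by rcases hτ with rfl | rfl | rfl <;> omega
    have hw1 : C.w z1 = 2 ∧ C.deg z1 = 2 := by
      have := h.w2 z1
      have := h.lin.1 z1
      unfold Config.adjw at h10
      omega
    have n12 : ¬ C.graph.Adj z1 z2 := fun a => no_tri h.lin hz1 a hz2.symm
    have d12 := h.dzero hne n12
    obtain ⟨p, π, hpt, -, hπ, hz1f⟩ := small2 (φ z1) (by rw [h.dself, hw1.1]) t (by
      rw [e1]; omega)
    have E1 : ∀ y, dot (φ z1) y = -τ * y t + π * y p := by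
      intro y
      rw [hz1f, dot_add_left, dot_single, dot_single, e1]
    rw [E1, e2] at d12
    have e2p : φ z2 p = -π := by
      rcases mul_self_eq_one_iff.1 hπ with rfl | rfl <;> linarith
    obtain ⟨y, hy, hyv⟩ := exists_other (s := z1) (by omega) v
    have hyx : y ≠ x := by rintro rfl; exact nx' z1 hz1 hy.symm
    have hvy : ¬ C.graph.Adj v y := fun a => no_tri h.lin hz1 hy a.symm
    have ty := nt y hyx hyv hvy
    have dvy := h.dzero hyv.symm hvy
    rw [D y ty] at dvy
    have eyt : φ y t = 0 := by
      rcases mul_eq_zero.1 dvy with h8 | h8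
      · exact absurd h8 hτ0
      · exact h8
    have d1y := h.dadj hy
    rw [E1, eyt] at d1y
    have eyp : φ y p = -π := by
      rcases mul_self_eq_one_iff.1 hπ with rfl | rfl <;> linarith
    have hyz2 : y ≠ z2 := by rintro rfl; exact hvy hz2
    have hyz2' : ¬ C.graph.Adj y z2 := fun a => no_quad h.lin hz1 hy a hz2.symm hyv.symm hne
    have dy2 := h.dzero hyz2.symm fun a => hyz2' a.symm
    -- peel z2
    have q1 := peel (φ z2) t
    have q2 := peel (φ z2 - Pi.single t (φ z2 t)) p
    have q3 : (φ z2 - Pi.single t (φ z2 t) : Fin N → ℤ) p = -π := by simp [hpt, e2p]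
    rw [q3, q1, h.dself, e2] at q2
    have hw2 := h.wle (hy1 z2 (nx _ hz2) (nx' _ hz2))
    set r := φ z2 - Pi.single t (-τ) - Pi.single p (-π) with hr
    have hrp : r p = 0 := by simp [hr, hpt, e2p]
    have q4 : dot r (φ y) = -1 := by
      rw [hr, dot_sub_left, dot_sub_left, dot_single, dot_single, dy2, eyt, eyp]
      linarith
    have hr0 : r ≠ 0 := by
      intro h0; rw [h0, dot_zero_left] at q4; omega
    have q5 : dot r r = C.w z2 - 2 := by
      rw [q2]; linarith
    obtain ⟨q, ρ, hrq, hρ⟩ := small1 r (by omega) hr0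
    rw [hrq, dot_single] at q4
    have hqp : q ≠ p := by
      rintro rfl
      rw [hrq] at hrp
      simp at hrp
      subst hrp; simp at hρ
    have q6 : dot r r = 1 := by rw [hrq, dot_single]; simp [hρ]
    have hz2a := hy1 z2 (nx _ hz2) (nx' _ hz2)
    have hz2d := h.lin.1 z2
    have hz2deg : C.deg z2 = 2 := by
      unfold Config.adjw at hz2a; omega
    have hz2f : φ z2 = Pi.single t (-τ) + Pi.single p (-π) + Pi.single q ρ := by
      rw [← hrq, hr]; abel
    have hya : C.adjw y = 0 := by
      have := h.wnn y
      by_contra hya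
      exact hv ((h.badl z1 ⟨v, y, hyv.symm, hz1.symm, hy, by omega, by omega⟩).2 v hz1.symm)
    have hwy : C.w y = 2 := by
      have := h.w2 y
      have := h.lin.1 y
      unfold Config.adjw at hya
      omega
    have hπ0 : π ≠ 0 := by rintro rfl; simp at hπ
    obtain ⟨q', π', hq'p, -, hπ', hyf⟩ := small2 (φ y) (by rw [h.dself, hwy]) p (by
      rw [eyp]; omega)
    have hqq : q' = q := by
      by_contra hqq
      have h0 : φ y q = 0 := by
        rw [hyf]; simp [hqp, Ne.symm hqq]
      rw [h0] at q4; simp at q4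
    subst hqq
    obtain ⟨s, hs, hsv⟩ := exists_other (s := z2) (by omega) v
    have hsx : s ≠ x := by rintro rfl; exact nx' z2 hz2 hs.symm
    have hvs : ¬ C.graph.Adj v s := fun a => no_tri h.lin hz2 hs a.symm
    have ts := nt s hsx hsv hvs
    have dvs := h.dzero hsv.symm hvs
    rw [D s ts] at dvs
    have est : φ s t = 0 := by
      rcases mul_eq_zero.1 dvs with h8 | h8
      · exact absurd h8 hτ0
      · exact h8
    have hsz1 : s ≠ z1 := by rintro rfl; exact hvs hz1
    have hz1s : ¬ C.graph.Adj z1 s := fun a => no_quad h.lin hz1 a hs.symm hz2.symm hsv.symm hne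
    have d1s := h.dzero hsz1.symm hz1s
    rw [E1, est] at d1s
    have esp : φ s p = 0 := by
      rcases mul_self_eq_one_iff.1 hπ with rfl | rfl <;> linarith
    have hsy : s ≠ y := by rintro rfl; exact hyz2' hs.symm
    have hys : ¬ C.graph.Adj y s := fun a =>
      no_pent h.lin hz1 hy a hs.symm hz2.symm hyv.symm hsv.symm hsz1.symm hne hyz2
    have dys := h.dzero hsy.symm hys
    rw [hyf, dot_add_left, dot_single, dot_single, esp] at dys
    have esq : φ s q' = 0 := by
      rcases mul_self_eq_one_iff.1 hπ' with rfl | rfl <;> linarith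
    have d2s := h.dadj hs
    rw [hz2f, dot_add_left, dot_add_left, dot_single, dot_single, dot_single, est, esp, esq] at d2s
    simp at d2s
  obtain ⟨z1, hz1⟩ := exists_nbr (s := v) (by omega)
  obtain ⟨z2, hz2, hne⟩ := exists_other (s := v) (by omega) z1
  by_cases h1 : C.adjw z1 = 0
  · exact key z1 z2 hz1 hz2 hne.symm h1
  by_cases h2 : C.adjw z2 = 0
  · exact key z2 z1 hz2 hz1 hne h2
  have := h.wnn z1
  have := h.wnn z2
  exact hv (h.badl v ⟨z1, z2, hne.symm, hz1, hz2, by omega, by omega⟩).1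

set_option maxHeartbeats 1000000 in
theorem final2 (h : Ctx C N φ S x u1 u2 e f) (hx : C.adjw x = 2)
    (hy1 : ∀ y, y ≠ x → ¬ C.graph.Adj x y → C.adjw y ≤ 1)
    (hV : ∀ u v, C.graph.Adj u v → C.adjw u = 1 → C.adjw v = 1 →
      C.graph.Adj x u ∨ C.graph.Adj x v) {v : C.V} (hv : v ∉ S)
    (htf : TForm ((supp (φ x)).erase e) (supp (φ x)) (φ v)) : False := by
  have hG : ((supp (φ x)).erase e).card ≤ 3 := by have := h.cardG; omega
  have hwf := @Ctx.wform C N φ S x u1 u2 e f h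
  have hdich := @Ctx.dich C N φ S x u1 u2 e f h hy1
  set G := (supp (φ x)).erase e with hGdef
  have hGX : ∀ k, k ∉ supp (φ x) → k ∉ G := fun k hk a => hk (Finset.mem_of_mem_erase a)
  obtain ⟨i, hi, j, hj, t, ht, τ, hij, hτ, hform⟩ := htf
  obtain ⟨hvx, hvx', -, -, -⟩ := h.out hv
  have hwv := hwf hi hj ht hij hform
  have hv1 := hy1 v hvx hvx'
  have hdv := h.lin.1 v
  have nx : ∀ z, C.graph.Adj v z → z ≠ x := by
    rintro z a rfl; exact hvx' a.symm
  have nx' : ∀ z, C.graph.Adj v z → ¬ C.graph.Adj x z := fun z a b => hv (h.end1 b a.symm)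
  have D : ∀ y, (∀ k ∈ G, φ y k = 0) → dot (φ v) (φ y) = τ * φ y t := by
    intro y hy
    rw [hform, dot_form, hy i hi, hy j hj]; ring
  have hz0 : ∀ z, C.graph.Adj v z → C.adjw v = 1 → C.adjw z = 0 ∧ C.w z = 2 ∧ C.deg z = 2 := by
    intro z hz hv1
    have h1 := hy1 z (nx z hz) (nx' z hz)
    have h2 := h.wnn z
    have h3 : C.adjw z ≠ 1 := by
      intro h3
      rcases hV v z hz hv1 h3 with a | a
      · exact hvx' a
      · exact nx' z hz a
    have h4 : C.adjw z = 0 := by omega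
    have := h.w2 z
    have := h.lin.1 z
    refine ⟨h4, ?_⟩
    unfold Config.adjw at h4
    omega
  by_cases hτ0 : τ = 0
  · subst hτ0
    have touch : ∀ z, C.graph.Adj v z → TForm G (supp (φ x)) (φ z) := by
      intro z hz
      rcases hdich (nx z hz) with h4 | h4
      · have hd := h.dadj hz
        rw [D z h4] at hd; simp at hd
      · exact h4.2
    obtain ⟨z, hz⟩ := exists_nbr (s := v) (by
      have := h.w2 v
      unfold Config.adjw at hv1
      omega)
    obtain ⟨a, ha, b, hb, s, hs, σ, hab, hσ, hzf⟩ := touch z hz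
    have hwz := hwf ha hb hs hab hzf
    have hdz := h.lin.1 z
    by_cases hd2 : C.deg v = 2
    · obtain ⟨z', hz', hne⟩ := exists_other (s := v) (by omega) z
      obtain ⟨a', ha', b', hb', s', hs', σ', hab', hσ', hzf'⟩ := touch z' hz'
      have hwz' := hwf ha' hb' hs' hab' hzf'
      have hdz' := h.lin.1 z'
      have dzz := h.dzero hne.symm fun a => no_tri h.lin hz a hz'.symm
      rw [hzf, hzf'] at dzz
      obtain ⟨-, o1, o2⟩ := orth_three G hG a b a' b' s s' σ σ' ha hb ha' hb' hab hab'
        (hGX _ hs) (hGX _ hs') dzz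
      have s1 : σ * σ = 1 := by rcases hσ with rfl | rfl | rfl <;> simp_all
      have s2 : σ' * σ' = 1 := by rcases hσ' with rfl | rfl | rfl <;> simp_all
      exact hv (h.badl v ⟨z, z', hne.symm, hz, hz', by unfold Config.adjw; omega,
        by unfold Config.adjw; omega⟩).1
    · have hd1 : C.adjw v = 1 := by
        have := one_nbr hz
        unfold Config.adjw
        omega
      obtain ⟨z0, zw, zd⟩ := hz0 z hz hd1
      have hσ0 : σ = 0 := by
        rcases hσ with rfl | rfl | rfl <;> omega
      subst hσ0
      obtain ⟨y, hy, hyv⟩ := exists_other (s := z) (by omega) v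
      have hyx : y ≠ x := by rintro rfl; exact nx' z hz hy.symm
      have hvy : ¬ C.graph.Adj v y := fun a => no_tri h.lin hz hy a.symm
      rcases hdich hyx with h4 | ⟨_, c, hc, d, hd, s', hs', σ', hcd, hσ', hyf⟩
      · have := h.dadj hy
        rw [hzf, dot_form, h4 a ha, h4 b hb] at this
        simp at this
      · have d0 := h.dzero hyv.symm hvy
        rw [hform, hyf] at d0
        exact (orth_three G hG i j c d t s' 0 σ' hi hj hc hd hij hcd (hGX _ ht) (hGX _ hs') d0).2.1
          rfl
  · have hττ : τ * τ = 1 := by rcases hτ with rfl | rfl | rfl <;> simp_all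
    have hdeg : C.deg v = 2 := by
      unfold Config.adjw at hv1
      omega
    have hadv : C.adjw v = 1 := by
      unfold Config.adjw
      omega
    have key : ∀ z1 z2, C.graph.Adj v z1 → C.graph.Adj v z2 → z1 ≠ z2 →
        TForm G (supp (φ x)) (φ z1) → (∀ k ∈ G, φ z2 k = 0) → False := by
      rintro z1 z2 hz1 hz2 hne ⟨a, ha, b, hb, s, hs, σ, hab, hσ, hzf⟩ t2
      have hwz := hwf ha hb hs hab hzf
      obtain ⟨_, w1, g1⟩ := hz0 z1 hz1 hadv
      obtain ⟨_, w2, g2⟩ := hz0 z2 hz2 hadv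
      have hσ0 : σ = 0 := by
        rcases hσ with rfl | rfl | rfl <;> omega
      subst hσ0
      have d2 := h.dadj hz2
      rw [D z2 t2] at d2
      have z2t : φ z2 t ≠ 0 := by intro h0; rw [h0] at d2; simp at d2
      obtain ⟨p, π, hpt, -, hπ, hz2f⟩ := small2 (φ z2) (by rw [h.dself, w2]) t z2t
      have hpG : p ∉ G := by
        intro hp
        have h0 := t2 p hp
        rw [hz2f] at h0
        simp [hpt] at h0
        subst h0; simp at hπ
      obtain ⟨y, hy, hyv⟩ := exists_other (s := z1) (by omega) v
      have hyx : y ≠ x := by rintro rfl; exact nx' z1 hz1 hy.symm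
      have hvy : ¬ C.graph.Adj v y := fun a => no_tri h.lin hz1 hy a.symm
      have hyz2 : y ≠ z2 := by rintro rfl; exact hvy hz2
      have hyz2' : ¬ C.graph.Adj y z2 := fun a => no_quad h.lin hz1 hy a hz2.symm hyv.symm hne
      have dy2 := h.dzero hyz2.symm fun a => hyz2' a.symm
      rcases hdich hyx with h4 | ⟨_, c, hc, d, hd, s', hs', σ', hcd, hσ', hyf⟩
      · have := h.dadj hy
        rw [hzf, dot_form, h4 a ha, h4 b hb] at this
        simp at this
      · have d0 := h.dzero hyv.symm hvy
        rw [hform, hyf] at d0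
        obtain ⟨o1, o2, o3⟩ := orth_three G hG i j c d t s' τ σ' hi hj hc hd hij hcd
          (hGX _ ht) (hGX _ hs') d0
        subst o1
        have n1 : t ≠ c := fun a => hGX _ ht (a ▸ hc)
        have n2 : t ≠ d := fun a => hGX _ ht (a ▸ hd)
        have n3 : p ≠ c := fun a => hpG (a ▸ hc)
        have n4 : p ≠ d := fun a => hpG (a ▸ hd)
        rw [hz2f, dot_add_left, dot_single, dot_single, hyf, eval_form, eval_form] at dy2
        simp [n1, n2, n3, n4, hpt] at dy2
        tauto
    obtain ⟨z1, hz1⟩ := exists_nbr (s := v) (by omega)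
    obtain ⟨z2, hz2, hne⟩ := exists_other (s := v) (by omega) z1
    obtain ⟨_, w1, g1⟩ := hz0 z1 hz1 hadv
    obtain ⟨_, w2, g2⟩ := hz0 z2 hz2 hadv
    have n12 : ¬ C.graph.Adj z1 z2 := fun a => no_tri h.lin hz1 a hz2.symm
    have d12 := h.dzero hne.symm n12
    rcases hdich (nx z1 hz1) with t1 | t1 <;> rcases hdich (nx z2 hz2) with t2 | t2
    · have d1 := h.dadj hz1
      have d2 := h.dadj hz2
      rw [D _ t1] at d1
      rw [D _ t2] at d2
      have e1 : φ z1 t = -τ := by rcases hτ with rfl | rfl | rfl <;> omega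
      have e2 : φ z2 t = -τ := by rcases hτ with rfl | rfl | rfl <;> omega
      obtain ⟨p, π, hpt, -, hπ, hz1f⟩ := small2 (φ z1) (by rw [h.dself, w1]) t (by
        rw [e1]; omega)
      obtain ⟨p', π', hpt', -, hπ', hz2f⟩ := small2 (φ z2) (by rw [h.dself, w2]) t (by
        rw [e2]; omega)
      have E1 : ∀ y, dot (φ z1) y = -τ * y t + π * y p := by
        intro y
        rw [hz1f, dot_add_left, dot_single, dot_single, e1]
      have E2 : ∀ y, dot (φ z2) y = -τ * y t + π' * y p' := by
        intro y
        rw [hz2f, dot_add_left, dot_single, dot_single, e2]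
      rw [E1, e2] at d12
      have hpp : p' = p := by
        by_contra hpp
        have h0 : φ z2 p = 0 := by rw [hz2f]; simp [hpt, Ne.symm hpp]
        rw [h0] at d12
        have : τ * τ = 0 := by linarith
        omega
      subst hpp
      have e3 : φ z2 p' = π' := by rw [hz2f]; simp [hpt]
      rw [e3] at d12
      obtain ⟨y, hy, hyv⟩ := exists_other (s := z1) (by omega) v
      have hvy : ¬ C.graph.Adj v y := fun a => no_tri h.lin hz1 hy a.symm
      have hyz2 : y ≠ z2 := by rintro rfl; exact hvy hz2
      have hyz2' : ¬ C.graph.Adj y z2 := fun a =>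
        no_quad h.lin hz1 hy a hz2.symm hyv.symm hne.symm
      have dy2 := h.dzero hyz2.symm fun a => hyz2' a.symm
      have dy1 := h.dadj hy
      rw [E1] at dy1
      rw [E2] at dy2
      clear hwf hdich D E1 E2 hform hz1f hz2f hV
      rcases hτ with rfl | rfl | rfl <;> rcases mul_self_eq_one_iff.1 hπ with rfl | rfl <;>
        rcases mul_self_eq_one_iff.1 hπ' with rfl | rfl <;> omega
    · exact key z2 z1 hz2 hz1 hne t2.2 t1
    · exact key z1 z2 hz1 hz2 hne.symm t1.2 t2
    · obtain ⟨_, a, ha, b, hb, s, hs, σ, hab, hσ, hzf⟩ := t1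
      obtain ⟨_, a', ha', b', hb', s', hs', σ', hab', hσ', hzf'⟩ := t2
      have hwz := hwf ha hb hs hab hzf
      rw [hzf, hzf'] at d12
      obtain ⟨-, o1, o2⟩ := orth_three G hG a b a' b' s s' σ σ' ha hb ha' hb' hab hab'
        (hGX _ hs) (hGX _ hs') d12
      rcases hσ with rfl | rfl | rfl <;> omega

end Ctx

/-- The theorem under the normalization that `φ x` has nonnegative entries. -/
theorem main_pos (C : Config) (hlin : C.IsLinear) (hwc : C.WorkingConditions)
    (N : ℕ) (φ : C.V → Fin N → ℤ)
    (hφ : C.IsEmbedding N φ) (m : ℕ) (vc : ℕ → C.V) (hebp : C.IsExtBadPart m vc)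
    (x : C.V) (hx : C.IsBad x)
    (hss : C.IsSemiStandardAtOn N φ x (C.ebpSet m vc)) (hpos : ∀ k, 0 ≤ φ x k)
    (v : C.V) (hvx : v ≠ x) (hsupp : (supp (φ v) ∩ supp (φ x)).Nonempty) :
    C.graph.Adj v x := by
  have hcand := hebp.1
  have hbl := bad_lemma hlin hwc m vc hcand
  obtain ⟨hxS, hxn, hx0, hx2⟩ := hbl x hx
  have hendl := end_lemma hlin m vc hcand.1 hcand.2.2.1 hcand.2.2.2
  set S := C.ebpSet m vc with hS
  by_contra hadj
  have hvS : v ∉ S := by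
    intro hvS
    have h1 := hss.1 v hvS x hxS
    rw [if_neg hvx, if_neg hadj, if_neg (fun a => C.graph.irrefl a.2)] at h1
    have h2 := Finset.card_pos.2 hsupp
    omega
  obtain ⟨u1, u2, hu, a1, a2, p1, p2⟩ := hx
  have hu1S := hxn u1 a1
  have hu2S := hxn u2 a2
  have ent : ∀ s ∈ S, ∀ k, φ s k = 0 ∨ φ s k = 1 ∨ φ s k = -1 := by
    intro s hs k
    apply entries
    have h1 := hss.1 s hs s hs
    rw [if_pos rfl, Finset.inter_self] at h1
    rw [hφ, if_pos rfl, h1]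
  have h1 := hss.1 u1 hu1S x hxS
  rw [if_neg a1.ne', if_pos a1.symm] at h1
  have h2 := hss.1 u2 hu2S x hxS
  rw [if_neg a2.ne', if_pos a2.symm] at h2
  have hn12 : ¬ C.graph.Adj u1 u2 := fun a => no_tri hlin a1 a a2.symm
  have h3 := hss.1 u1 hu1S u2 hu2S
  rw [if_neg hu, if_neg hn12, if_pos ⟨a1, a2⟩] at h3
  have h4 := hss.2 u1 hu1S u2 hu2S hu a1 a2
  obtain ⟨e, he⟩ := Finset.card_eq_one.1 (show (supp (φ u1) ∩ supp (φ x)).card = 1 by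
    exact_mod_cast h1)
  obtain ⟨e', he'⟩ := Finset.card_eq_one.1 (show (supp (φ u2) ∩ supp (φ x)).card = 1 by
    exact_mod_cast h2)
  have heu2 : e ∈ supp (φ u2) := by
    rw [he] at h4
    by_contra hc
    rw [Finset.singleton_inter_of_notMem hc] at h4
    simp at h4
  have hem : e ∈ supp (φ u1) ∩ supp (φ x) := by rw [he]; simp
  rw [Finset.mem_inter] at hem
  have hee : e = e' := by
    have : e ∈ supp (φ u2) ∩ supp (φ x) := Finset.mem_inter.2 ⟨heu2, hem.2⟩
    rw [he'] at this; simpa using this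
  subst hee
  obtain ⟨f, hfm, hfe⟩ := Finset.exists_mem_ne (show 1 < (supp (φ u1) ∩ supp (φ u2)).card by omega) e
  have hef : supp (φ u1) ∩ supp (φ u2) = {e, f} := by
    symm
    apply Finset.eq_of_subset_of_card_le
    · intro k hk
      simp only [Finset.mem_insert, Finset.mem_singleton] at hk
      rcases hk with rfl | rfl
      · exact Finset.mem_inter.2 ⟨hem.1, heu2⟩
      · exact hfm
    · rw [Finset.card_pair hfe.symm]; omega
  rw [Finset.mem_inter] at hfm
  have x01 : ∀ k, φ x k = 0 ∨ φ x k = 1 := by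
    intro k
    have := ent x hxS k
    have := hpos k
    omega
  have xe : φ x e = 1 := by
    have := (mem_supp _ _).1 hem.2
    have := x01 e
    omega
  have dx1 := dot_inter (φ u1) (φ x)
  rw [he, Finset.sum_singleton, hφ, if_neg a1.ne', if_pos a1.symm, xe] at dx1
  have dx2 := dot_inter (φ u2) (φ x)
  rw [he', Finset.sum_singleton, hφ, if_neg a2.ne', if_pos a2.symm, xe] at dx2
  have d12 := dot_inter (φ u1) (φ u2)
  rw [hef, Finset.sum_pair hfe.symm, hφ, if_neg hu, if_neg hn12] at d12
  have u1e : φ u1 e = -1 := by omega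
  have u2e : φ u2 e = -1 := by omega
  have u1x : ∀ k, k ≠ e → φ x k ≠ 0 → φ u1 k = 0 := by
    intro k hk hxk
    by_contra hc
    have : k ∈ supp (φ u1) ∩ supp (φ x) :=
      Finset.mem_inter.2 ⟨(mem_supp _ _).2 hc, (mem_supp _ _).2 hxk⟩
    rw [he] at this
    exact hk (by simpa using this)
  have u2x : ∀ k, k ≠ e → φ x k ≠ 0 → φ u2 k = 0 := by
    intro k hk hxk
    by_contra hc
    have : k ∈ supp (φ u2) ∩ supp (φ x) :=
      Finset.mem_inter.2 ⟨(mem_supp _ _).2 hc, (mem_supp _ _).2 hxk⟩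
    rw [he'] at this
    exact hk (by simpa using this)
  have ctx : Ctx C N φ S x u1 u2 e f := {
    lin := hlin
    emb := hφ
    w2 := hwc.1
    le3 := hwc.2.1
    xS := hxS
    u1S := hu1S
    u2S := hu2S
    a1 := a1
    a2 := a2
    u12 := hu
    p1 := p1
    p2 := p2
    endl := hendl
    badl := fun b hb => ⟨(hbl b hb).1, (hbl b hb).2.1⟩
    semi := hss.1
    x01 := x01
    xe := xe
    xf := by
      by_contra hc
      exact (mem_supp _ _).1 hfm.1 (u1x f hfe hc)
    u1e := u1e
    u2e := u2e
    u1x := u1x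
    u2x := u2x
    u1f := (mem_supp _ _).1 hfm.1
    uf := by
      rw [u1e, u2e] at d12
      have b1 := ent u1 hu1S f
      have b2 := ent u2 hu2S f
      rcases b1 with b1 | b1 | b1 <;> rw [b1] at d12 ⊢ <;> omega
    uk := by
      intro k hke hkf
      by_contra hc
      push Not at hc
      have : k ∈ supp (φ u1) ∩ supp (φ u2) :=
        Finset.mem_inter.2 ⟨(mem_supp _ _).2 hc.1, (mem_supp _ _).2 hc.2⟩
      rw [hef] at this
      simp at this
      tauto }
  obtain ⟨k, hk⟩ := hsupp
  rw [Finset.mem_inter] at hk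
  have htouch : ∃ k ∈ supp (φ x), φ v k ≠ 0 := ⟨k, hk.2, (mem_supp _ _).1 hk.1⟩
  have hxbad : C.IsBad x := ⟨u1, u2, hu, a1, a2, p1, p2⟩
  have hcG := ctx.cardG
  rcases (by omega : C.adjw x = 0 ∨ C.adjw x = 1 ∨ C.adjw x = 2) with hw | hw | hw
  · by_cases hv1 : C.adjw v ≤ 1
    · obtain ⟨i, hi, j, hj, _, _, _, hij, _⟩ := ctx.tform hvS (ctx.wle hv1) htouch
      rw [hw] at hcG
      exact hij (Finset.card_le_one.1 (by omega) i hi j hj)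
    · have q1 : C.adjw u1 = 1 := by
        by_contra hc
        have := hwc.2.2.1 u1 v (by omega) (by omega)
        exact hvS (this ▸ hu1S)
      have q2 : C.adjw u2 = 1 := by
        by_contra hc
        have := hwc.2.2.1 u2 v (by omega) (by omega)
        exact hvS (this ▸ hu2S)
      have hve := ctx.heavy q1 q2 hvS
      have hsum := ctx.sumX (φ v)
      rw [(ctx.out hvS).2.2.1, ← Finset.add_sum_erase _ _ hem.2, hve] at hsum
      have hke : k ≠ e := by
        rintro rfl
        exact (mem_supp _ _).1 hk.1 hve
      have hkG : k ∈ (supp (φ x)).erase e := Finset.mem_erase.2 ⟨hke, hk.2⟩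
      obtain ⟨g, hg⟩ := Finset.card_eq_one.1 (show ((supp (φ x)).erase e).card = 1 by omega)
      rw [hg] at hkG hsum
      simp at hkG
      subst hkG
      simp at hsum
      exact (mem_supp _ _).1 hk.1 hsum.symm
  · have hy1 : ∀ y, y ≠ x → ¬ C.graph.Adj x y → C.adjw y ≤ 1 := by
      intro y _ hy
      by_contra hc
      exact hy (hwc.2.2.2.1 y x (by omega) hxbad hw)
    exact ctx.final1 hw hy1 hvS
      (ctx.tform hvS (ctx.wle (hy1 v hvx (ctx.out hvS).2.1)) htouch)
  · have hy1 : ∀ y, y ≠ x → ¬ C.graph.Adj x y → C.adjw y ≤ 1 := by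
      intro y hyx _
      by_contra hc
      exact hyx (hwc.2.2.1 y x (by omega) (by omega))
    exact ctx.final2 hw hy1 (fun u w a b c => hwc.2.2.2.2.2.1 u w x a b c hxbad hw) hvS
      (ctx.tform hvS (ctx.wle (hy1 v hvx (ctx.out hvS).2.1)) htouch)

end Final

/-- Lemma 5.4: if the extended bad part is embedded semi-standardly at `x`, then any
vertex whose support meets that of `x` is adjacent to `x`. -/
theorem statement5 (C : Config) (hlin : C.IsLinear) (hwc : C.WorkingConditions)
    (hbad : ∃ y : C.V, C.IsBad y) (N : ℕ) (φ : C.V → Fin N → ℤ)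
    (hφ : C.IsEmbedding N φ) (m : ℕ) (vc : ℕ → C.V) (hebp : C.IsExtBadPart m vc)
    (x : C.V) (hx : C.IsBad x)
    (hss : C.IsSemiStandardAtOn N φ x (C.ebpSet m vc))
    (v : C.V) (hvx : v ≠ x) (hsupp : (supp (φ v) ∩ supp (φ x)).Nonempty) :
    C.graph.Adj v x := by
  let s : Fin N → ℤ := fun k => if φ x k < 0 then -1 else 1
  have hs : ∀ k, s k * s k = 1 := by
    intro k; simp only [s]; split_ifs <;> simp
  let ψ : C.V → Fin N → ℤ := fun u k => s k * φ u k
  have hsup : ∀ u, supp (ψ u) = supp (φ u) := by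
    intro u
    ext k
    rw [mem_supp, mem_supp]
    have : s k ≠ 0 := by
      intro h0; have := hs k; rw [h0] at this; simp at this
    simp [ψ, this]
  have hψ : C.IsEmbedding N ψ := by
    intro u w
    rw [← hφ u w]
    unfold dot
    apply Finset.sum_congr rfl
    intro k _
    have := hs k
    simp only [ψ]
    linear_combination (φ u k * φ w k) * this
  have hss' : C.IsSemiStandardAtOn N ψ x (C.ebpSet m vc) := by
    unfold Config.IsSemiStandardAtOn
    simp only [hsup]
    exact hss
  refine main_pos C hlin hwc N ψ hψ m vc hebp x hx hss' ?_ v hvx ?_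
  · intro k
    simp only [ψ, s]
    split_ifs with h
    · omega
    · omega
  · rw [hsup, hsup]; exact hsupp

end LensPaper
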